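/- arXiv:2104.00600 — 3 statements merged into one kernel-verified Lean document; each statement's English description precedes it below -/
import Mathlib

section
/- If G is a forest on n vertices with no isolated vertices, then the average order of a dominating set of G satisfies avd(G) ≤ 2n/3. -/
open scoped Classical

/-- The family of all dominating sets of `G`, as a `Finset` of `Finset`s. -/
noncomputable def domSets {V : Type*} [Fintype V] (G : SimpleGraph V) :
    Finset (Finset V) :=
  Finset.univ.filter fun S => ∀ v ∉ S, ∃ u ∈ S, G.Adj u v

/-- The average order of a dominating set of `G`. -/
noncomputable def avd {V : Type*} [Fintype V] (G : SimpleGraph V) : ℚ :=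
  (∑ S ∈ domSets G, (S.card : ℚ)) / ((domSets G).card : ℚ)

/-- A leaf is a vertex of degree one. -/
noncomputable def IsLeaf {V : Type*} [Fintype V] (G : SimpleGraph V) (v : V) : Prop :=
  G.degree v = 1

/-- The set of leaf neighbors of `w` in `G`. -/
noncomputable def leafNbrSet {V : Type*} [Fintype V] (G : SimpleGraph V) (w : V) : Set V :=
  {v | G.Adj w v ∧ IsLeaf G v}

/-- A support vertex is a vertex adjacent to at least one leaf. -/
noncomputable def IsSupport {V : Type*} [Fintype V] (G : SimpleGraph V) (w : V) : Prop :=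
  ∃ v, G.Adj w v ∧ IsLeaf G v

section helpers
variable {V : Type*} [Fintype V] (G : SimpleGraph V)

noncomputable def privN (S : Finset V) (w : V) : Finset V :=
  Finset.univ.filter fun x => x ∉ S ∧ G.Adj w x ∧ w ∈ S ∧ ∀ u ∈ S, G.Adj u x → u = w

noncomputable def isoC (S : Finset V) : Finset V :=
  Finset.univ.filter fun v => v ∈ S ∧ (∀ u ∈ S, ¬ G.Adj u v) ∧ privN G S v = ∅

noncomputable def blk (S : Finset V) (w : V) : Finset V :=
  Finset.univ.filter fun v => v ∈ isoC G S ∧ G.Adj w v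

noncomputable def swp (S : Finset V) (w : V) : Finset V := insert w (S \ blk G S w)

noncomputable def pick (T : Finset V) (d : V) : V := if h : T.Nonempty then h.choose else d

theorem pick_mem {T : Finset V} {d : V} (h : T.Nonempty) : pick T d ∈ T := by
  unfold pick; rw [dif_pos h]; exact h.choose_spec

theorem pick_congr {T : Finset V} {d e : V} (h : T.Nonempty) : pick T d = pick T e := by
  unfold pick; rw [dif_pos h, dif_pos h]

variable {G}

theorem mem_dom {S : Finset V} : S ∈ domSets G ↔ ∀ v ∉ S, ∃ u ∈ S, G.Adj u v := by
  simp [domSets]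

theorem mem_privN {S : Finset V} {w x : V} : x ∈ privN G S w ↔
    x ∉ S ∧ G.Adj w x ∧ w ∈ S ∧ ∀ u ∈ S, G.Adj u x → u = w := by
  simp [privN]

theorem mem_isoC {S : Finset V} {v : V} : v ∈ isoC G S ↔
    v ∈ S ∧ (∀ u ∈ S, ¬ G.Adj u v) ∧ privN G S v = ∅ := by
  simp [isoC]

theorem mem_blk {S : Finset V} {w v : V} : v ∈ blk G S w ↔ v ∈ isoC G S ∧ G.Adj w v := by
  simp [blk]

theorem no_tri (hf : G.IsAcyclic) {a b c : V} (h1 : G.Adj a b) (h2 : G.Adj b c)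
    (h3 : G.Adj a c) : False := by
  have hu := SimpleGraph.isAcyclic_iff_path_unique.1 hf
  have := @hu a c ⟨.cons h3 .nil, by simp [h3.ne]⟩
    ⟨.cons h1 (.cons h2 .nil), by simp [h1.ne, h2.ne, h3.ne]⟩
  have := congrArg (fun p => p.1.length) this
  simp at this

theorem no_c4 (hf : G.IsAcyclic) {w u x u' : V} (h1 : G.Adj w u) (h2 : G.Adj u x)
    (h3 : G.Adj w u') (h4 : G.Adj u' x) (hwx : w ≠ x) : u = u' := by
  have hu := SimpleGraph.isAcyclic_iff_path_unique.1 hf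
  have := @hu w x ⟨.cons h3 (.cons h4 .nil), by simp [h3.ne, h4.ne, hwx]⟩
    ⟨.cons h1 (.cons h2 .nil), by simp [h1.ne, h2.ne, hwx]⟩
  have := congrArg (fun p => p.1.support) this
  simp at this
  exact this.symm

theorem nbr_not_mem {S : Finset V} {v w : V} (hv : v ∈ isoC G S) (h : G.Adj w v) : w ∉ S :=
  fun hw => (mem_isoC.1 hv).2.1 w hw h

theorem two_nbrs {S : Finset V} {v w : V} (hv : v ∈ isoC G S) (h : G.Adj w v) :
    ∃ u ∈ S, G.Adj u w ∧ u ≠ v := by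
  by_contra hc
  push Not at hc
  have h1 := mem_isoC.1 hv
  have : w ∈ privN G S v := mem_privN.2 ⟨nbr_not_mem hv h, h.symm, h1.1, hc⟩
  rw [h1.2.2] at this
  simp at this

theorem swp_dom (hf : G.IsAcyclic) {S : Finset V} {w : V} (hS : S ∈ domSets G) :
    swp G S w ∈ domSets G := by
  rw [mem_dom] at hS ⊢
  intro x hx
  simp only [swp, Finset.mem_insert, Finset.mem_sdiff, not_or, not_and, not_not] at hx ⊢
  by_cases hxS : x ∈ S
  · exact ⟨w, Or.inl rfl, (mem_blk.1 (hx.2 hxS)).2⟩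
  · obtain ⟨u, huS, hux⟩ := hS x hxS
    by_cases hu : u ∈ blk G S w
    · obtain ⟨hu1, hu2⟩ := mem_blk.1 hu
      obtain ⟨u', hu'S, hu'x, hne⟩ := two_nbrs hu1 hux.symm
      refine ⟨u', Or.inr ⟨hu'S, fun hb => hne ?_⟩, hu'x⟩
      exact no_c4 hf (mem_blk.1 hb).2 hu'x hu2 hux (Ne.symm hx.1)
    · exact ⟨u, Or.inr ⟨huS, hu⟩, hux⟩

theorem swp_priv (hf : G.IsAcyclic) {S : Finset V} {w : V} (hS : S ∈ domSets G) (hw : w ∉ S) :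
    privN G (swp G S w) w = blk G S w := by
  rw [mem_dom] at hS
  ext x
  rw [mem_privN]
  simp only [swp, Finset.mem_insert, Finset.mem_sdiff, not_or, not_and, not_not]
  constructor
  · rintro ⟨⟨hxw, hx⟩, hwx, -, hall⟩
    by_cases hxS : x ∈ S
    · exact hx hxS
    · exfalso
      obtain ⟨u, huS, hux⟩ := hS x hxS
      by_cases hu : u ∈ blk G S w
      · exact no_tri hf (mem_blk.1 hu).2 hux hwx
      · exact hw (hall u (Or.inr ⟨huS, hu⟩) hux ▸ huS)
  · intro hx
    obtain ⟨h1, h2⟩ := mem_blk.1 hx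
    refine ⟨⟨h2.ne', fun _ => hx⟩, h2, Or.inl trivial, ?_⟩
    rintro u (rfl | ⟨huS, -⟩) hux
    · rfl
    · exact absurd hux ((mem_isoC.1 h1).2.1 u huS)

theorem swp_inv {S : Finset V} {w : V} (hw : w ∉ S) :
    (swp G S w).erase w ∪ blk G S w = S := by
  ext x
  simp only [swp, Finset.mem_insert, Finset.mem_sdiff, Finset.mem_union, Finset.mem_erase]
  have : x ∈ blk G S w → x ∈ S := fun h => (mem_isoC.1 (mem_blk.1 h).1).1
  have : x = w → x ∉ S := by rintro rfl; exact hw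
  tauto

theorem crit_cases {S : Finset V} {v : V} (hS : S ∈ domSets G) (hv : v ∈ S)
    (hc : S.erase v ∉ domSets G) (hp : privN G S v = ∅) : v ∈ isoC G S := by
  rw [mem_dom] at hS
  rw [mem_dom] at hc
  push Not at hc
  obtain ⟨x, hx, hn⟩ := hc
  by_cases hxv : x = v
  · subst hxv
    refine mem_isoC.2 ⟨hv, fun u hu h => ?_, hp⟩
    exact hn u (Finset.mem_erase.2 ⟨h.ne, hu⟩) h
  · exfalso
    have hxS : x ∉ S := fun h => hx (Finset.mem_erase.2 ⟨hxv, h⟩)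
    have hall : ∀ u ∈ S, G.Adj u x → u = v := by
      intro u hu h
      by_contra hne
      exact hn u (Finset.mem_erase.2 ⟨hne, hu⟩) h
    obtain ⟨u, hu, h⟩ := hS x hxS
    have : x ∈ privN G S v := mem_privN.2 ⟨hxS, hall u hu h ▸ h, hv, hall⟩
    rw [hp] at this
    simp at this

/-- the charging map -/
noncomputable def chg (G : SimpleGraph V) (f : V → V) (p : Σ _ : Finset V, V) :
    Σ _ : Finset V, V :=
  if (privN G p.1 p.2).Nonempty then ⟨p.1, pick (privN G p.1 p.2) p.2⟩
  else if p.2 = pick (blk G p.1 (f p.2)) p.2 then ⟨p.1, f p.2⟩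
  else ⟨swp G p.1 (f p.2), p.2⟩

/-- the three kinds of image -/
theorem chg_cases (hf : G.IsAcyclic) (f : V → V) (hfa : ∀ v, G.Adj (f v) v)
    {S : Finset V} {v : V} (hS : S ∈ domSets G) (hv : v ∈ S)
    (hc : S.erase v ∉ domSets G) :
    ∃ T x, chg G f ⟨S, v⟩ = ⟨T, x⟩ ∧ T ∈ domSets G ∧ x ∉ T ∧
    ((T = S ∧ x ∈ privN G T v ∧ x = pick (privN G T v) x) ∨
     (T = S ∧ (∀ w, x ∉ privN G T w) ∧ v = pick (blk G S x) x) ∨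
     (∃ w, x = v ∧ x ∈ privN G T w ∧ x ≠ pick (privN G T w) x ∧
        S = T.erase w ∪ privN G T w)) := by
  by_cases h1 : (privN G S v).Nonempty
  · refine ⟨S, pick (privN G S v) v, by simp [chg, h1], hS, ?_, Or.inl ⟨rfl, pick_mem h1, ?_⟩⟩
    · exact (mem_privN.1 (pick_mem h1)).1
    · exact pick_congr h1
  · have hi := crit_cases hS hv hc (Finset.not_nonempty_iff_eq_empty.1 h1)
    have hw := nbr_not_mem hi (hfa v)
    have hb : v ∈ blk G S (f v) := mem_blk.2 ⟨hi, hfa v⟩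
    by_cases h2 : v = pick (blk G S (f v)) v
    · refine ⟨S, f v, by simp only [chg]; rw [if_neg h1, if_pos h2], hS, hw,
        Or.inr (Or.inl ⟨rfl, ?_, ?_⟩)⟩
      · intro w hm
        obtain ⟨u, hu, hua, hne⟩ := two_nbrs hi (hfa v)
        have := (mem_privN.1 hm).2.2.2
        exact hne ((this u hu hua).trans (this v hv (hfa v).symm).symm)
      · exact h2.trans (pick_congr ⟨v, hb⟩)
    · have hp := swp_priv hf hS hw
      have hm : v ∈ privN G (swp G S (f v)) (f v) := hp ▸ hb
      refine ⟨swp G S (f v), v, by simp only [chg]; rw [if_neg h1, if_neg h2], swp_dom hf hS,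
        (mem_privN.1 hm).1, Or.inr (Or.inr ⟨f v, rfl, hm, ?_, ?_⟩)⟩
      · rw [hp]; exact h2
      · rw [hp]; exact (swp_inv hw).symm

theorem priv_unique {T : Finset V} {x w w' : V} (h : x ∈ privN G T w) (h' : x ∈ privN G T w') :
    w = w' := by
  rw [mem_privN] at h h'
  exact h'.2.2.2 w h.2.2.1 h.2.1

theorem crit_le (hf : G.IsAcyclic) (hiso : ∀ v : V, ∃ u, G.Adj v u) :
    ((domSets G).sigma fun S => S.filter fun v => S.erase v ∉ domSets G).card ≤
    ((domSets G).sigma fun S => Sᶜ).card := by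
  choose f hfa using hiso
  have hfa' : ∀ v, G.Adj (f v) v := fun v => (hfa v).symm
  apply Finset.card_le_card_of_injOn (chg G f)
  · rintro ⟨S, v⟩ h
    simp only [Finset.coe_sigma, Finset.mem_coe, Finset.mem_sigma, Set.mem_sigma_iff, Finset.mem_filter] at h
    obtain ⟨T, x, he, hT, hx, -⟩ := chg_cases hf f hfa' h.1 h.2.1 h.2.2
    rw [he]
    simp [hT, hx]
  · rintro ⟨S, v⟩ h ⟨S', v'⟩ h' heq
    simp only [Finset.coe_sigma, Finset.mem_coe, Finset.mem_sigma, Set.mem_sigma_iff, Finset.mem_filter] at h h'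
    obtain ⟨T, x, he, -, -, hk⟩ := chg_cases hf f hfa' h.1 h.2.1 h.2.2
    obtain ⟨T', x', he', -, -, hk'⟩ := chg_cases hf f hfa' h'.1 h'.2.1 h'.2.2
    rw [he, he'] at heq
    obtain ⟨rfl, hx⟩ := Sigma.mk.inj heq
    obtain rfl := eq_of_heq hx
    rcases hk with ⟨rfl, a1, a2⟩ | ⟨rfl, a1, a2⟩ | ⟨w, rfl, a1, a2, rfl⟩ <;>
    rcases hk' with ⟨rfl, b1, b2⟩ | ⟨rfl, b1, b2⟩ | ⟨w', b0, b1, b2, b3⟩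
    · rw [priv_unique a1 b1]
    · exact absurd a1 (b1 _)
    · rw [priv_unique a1 b1] at a2; exact absurd a2 b2
    · exact absurd b1 (a1 _)
    · rw [a2, ← b2]
    · exact absurd b1 (a1 _)
    · rw [priv_unique b1 a1] at b2; exact absurd b2 a2
    · exact absurd a1 (b1 _)
    · rw [b3, priv_unique a1 b1, b0]

theorem noncrit_le :
    ((domSets G).sigma fun S => S.filter fun v => ¬ S.erase v ∉ domSets G).card ≤
    ((domSets G).sigma fun S => Sᶜ).card := by
  apply Finset.card_le_card_of_injOn (fun p => ⟨p.1.erase p.2, p.2⟩)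
  · rintro ⟨S, v⟩ h
    simp only [Finset.coe_sigma, Finset.mem_coe, Finset.mem_sigma, Set.mem_sigma_iff, Finset.mem_filter, not_not] at h
    simp [h.2.2]
  · rintro ⟨S, v⟩ h ⟨S', v'⟩ h' heq
    simp only [Finset.coe_sigma, Finset.mem_coe, Finset.mem_sigma, Set.mem_sigma_iff, Finset.mem_filter] at h h'
    obtain ⟨h1, h2⟩ := Sigma.mk.inj heq
    obtain rfl : v = v' := eq_of_heq h2
    have : S = S' := by
      rw [← Finset.insert_erase h.2.1, ← Finset.insert_erase h'.2.1]
      exact congrArg _ h1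
    rw [this]

end helpers

/-- If `G` is a forest on `n` vertices with no isolated vertices, then the average order
of a dominating set of `G` satisfies `avd G ≤ 2n/3`. -/
theorem avd_forest_le {V : Type*} [Fintype V] (G : SimpleGraph V)
    (hforest : G.IsAcyclic) (hiso : ∀ v : V, ∃ u, G.Adj v u) :
    avd G ≤ 2 * (Fintype.card V : ℚ) / 3 := by
  have h1 := crit_le hforest hiso
  have h2 := noncrit_le (G := G)
  rw [Finset.card_sigma, Finset.card_sigma] at h1 h2
  have h3 : ∑ S ∈ domSets G, S.card =
      ∑ S ∈ domSets G, (S.filter fun v => S.erase v ∉ domSets G).card +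
      ∑ S ∈ domSets G, (S.filter fun v => ¬ S.erase v ∉ domSets G).card := by
    rw [← Finset.sum_add_distrib]
    exact Finset.sum_congr rfl fun S _ => (Finset.card_filter_add_card_filter_not _).symm
  have h4 : ∑ S ∈ domSets G, S.card + ∑ S ∈ domSets G, (Sᶜ).card =
      (domSets G).card * Fintype.card V := by
    rw [← Finset.sum_add_distrib, ← smul_eq_mul, ← Finset.sum_const]
    exact Finset.sum_congr rfl fun S _ => Finset.card_add_card_compl S
  have h5 : 3 * ∑ S ∈ domSets G, S.card ≤ 2 * ((domSets G).card * Fintype.card V) := by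
    omega
  have h6 : 0 < (domSets G).card :=
    Finset.card_pos.2 ⟨Finset.univ, mem_dom.2 fun v hv => absurd (Finset.mem_univ v) hv⟩
  have h7 : (3 : ℚ) * ∑ S ∈ domSets G, (S.card : ℚ) ≤
      2 * ((domSets G).card * Fintype.card V) := by exact_mod_cast h5
  have h8 : (0 : ℚ) < (domSets G).card := by exact_mod_cast h6
  unfold avd
  rw [div_le_div_iff₀ h8 (by norm_num)]
  linarith
end

section
/- Let G be a forest on n vertices with no isolated vertices. Then avd(G) = 2n/3 if and only if every non-leaf vertex of G is a support vertex with exactly one or two leaf neighbors. -/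
open scoped Classical

namespace AvdAux

variable {V : Type*} [Fintype V] (G : SimpleGraph V)

/-- number of dominating sets containing `v` -/
noncomputable def cin (v : V) : ℕ := ((domSets G).filter fun S => v ∈ S).card

/-- number of dominating sets not containing `v` -/
noncomputable def cout (v : V) : ℕ := ((domSets G).filter fun S => v ∉ S).card

/-- `x` is the only element of `S` in the closed neighborhood of `u` -/
def UQ (u x : V) (S : Finset V) : Prop :=
  (x = u ∨ G.Adj u x) ∧ x ∈ S ∧ ∀ y ∈ S, (y = u ∨ G.Adj u y) → y = x

/-- number of dominating sets for which `x` is the only dominator of `u` -/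
noncomputable def cuq (u x : V) : ℕ := ((domSets G).filter fun S => UQ G u x S).card

/-- non-leaf without leaf neighbor -/
def InR (u : V) : Prop := ¬ IsLeaf G u ∧ ∀ y, G.Adj u y → ¬ IsLeaf G y

variable {G}

lemma mem_dom {S : Finset V} : S ∈ domSets G ↔ ∀ v ∉ S, ∃ u ∈ S, G.Adj u v := by
  simp [domSets]

lemma leaf_iff {v : V} : IsLeaf G v ↔ ∃ s, G.Adj v s ∧ ∀ y, G.Adj v y → y = s := by
  unfold IsLeaf
  rw [SimpleGraph.degree_eq_one_iff_existsUnique_adj]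
  rfl

lemma cin_add_cout (v : V) : cin G v + cout G v = (domSets G).card := by
  unfold cin cout
  exact Finset.card_filter_add_card_filter_not _

lemma sum_card : ∑ S ∈ domSets G, S.card = ∑ v, cin G v := by
  unfold cin
  simp_rw [Finset.card_filter]
  rw [Finset.sum_comm]
  simp

lemma univ_mem : (Finset.univ : Finset V) ∈ domSets G := by
  simp [mem_dom]

lemma cin_pos (v : V) : 0 < cin G v := by
  unfold cin
  exact Finset.card_pos.2 ⟨Finset.univ, by simp [univ_mem]⟩

/-- a leaf with neighbor `s` -/
lemma leaf_half {l s : V} (hl : IsLeaf G l) (hs : G.Adj l s) : 2 * cout G l = cin G s := by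
  obtain ⟨s', h1, h2⟩ := leaf_iff.1 hl
  obtain rfl := h2 s hs
  have hne : l ≠ s := hs.ne
  have hA : cin G s = ((domSets G).filter fun S => s ∈ S ∧ l ∈ S).card + cout G l := by
    unfold cin cout
    rw [← Finset.card_filter_add_card_filter_not (s := (domSets G).filter fun S => s ∈ S)
      (fun S => l ∈ S), Finset.filter_filter, Finset.filter_filter]
    congr 2
    ext S
    simp only [Finset.mem_filter, mem_dom]
    constructor
    · tauto
    · rintro ⟨h, hlS⟩
      obtain ⟨u, hu, hul⟩ := h l hlS
      have := h2 u hul.symm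
      subst this
      exact ⟨h, hu, hlS⟩
  have hB : ((domSets G).filter fun S => s ∈ S ∧ l ∈ S).card = cout G l := by
    unfold cout
    refine Finset.card_bij' (fun S _ => S.erase l) (fun S _ => insert l S) ?_ ?_ ?_ ?_
    · intro S hS
      simp only [Finset.mem_filter, mem_dom] at hS ⊢
      refine ⟨?_, by simp⟩
      intro v hv
      by_cases hvl : v = l
      · subst hvl
        exact ⟨s, by simp [hS.2.1, hne.symm], hs.symm⟩
      · obtain ⟨u, hu, huv⟩ := hS.1 v (by simpa [hvl] using hv)
        by_cases hul : u = l
        · subst hul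
          have := h2 v huv
          subst this
          simp [hS.2.1, hvl] at hv
        · exact ⟨u, by simp [hul, hu], huv⟩
    · intro S hS
      simp only [Finset.mem_filter, mem_dom] at hS ⊢
      refine ⟨?_, ?_, by simp⟩
      · intro v hv
        simp only [Finset.mem_insert, not_or] at hv
        obtain ⟨u, hu, huv⟩ := hS.1 v hv.2
        exact ⟨u, by simp [hu], huv⟩
      · obtain ⟨u, hu, hul⟩ := hS.1 l hS.2
        have := h2 u hul.symm
        subst this
        simp [hu]
    · intro S hS
      simp only [Finset.mem_filter] at hS
      exact Finset.insert_erase hS.2.2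
    · intro S hS
      simp only [Finset.mem_filter] at hS
      exact Finset.erase_insert hS.2
  omega

/-- the leaf-support trade for the support `v` with leaf `l` -/
lemma supp_ge {v l : V} (hl : IsLeaf G l) (hvl : G.Adj v l) : 2 * cout G v ≤ cin G v := by
  have h1 := leaf_half hl hvl.symm
  have h2 : cout G v ≤ cout G l := by
    unfold cout
    apply Finset.card_le_card_of_injOn (fun S => insert v (S.erase l))
    · intro S hS
      simp only [Finset.coe_filter, Set.mem_ofPred_eq, mem_dom] at hS ⊢
      obtain ⟨s', h1, h2⟩ := leaf_iff.1 hl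
      obtain rfl := h2 v hvl.symm
      refine ⟨?_, by simp [hvl.ne.symm]⟩
      intro x hx
      simp only [Finset.mem_insert, Finset.mem_erase, not_or] at hx
      by_cases hxl : x = l
      · subst hxl
        exact ⟨v, by simp, hvl⟩
      · obtain ⟨u, hu, hux⟩ := hS.1 x (by tauto)
        refine ⟨u, ?_, hux⟩
        have : u ≠ l := by
          rintro rfl
          exact hx.1 (h2 x hux)
        simp [this, hu]
    · intro S hS T hT hST
      simp only [Finset.coe_filter, Set.mem_ofPred_eq, mem_dom] at hS hT
      obtain ⟨s', h1, h2⟩ := leaf_iff.1 hl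
      obtain rfl := h2 v hvl.symm
      have hlS : l ∈ S := by
        by_contra h
        obtain ⟨u, hu, hul⟩ := hS.1 l h
        exact hS.2 (h2 u hul.symm ▸ hu)
      have hlT : l ∈ T := by
        by_contra h
        obtain ⟨u, hu, hul⟩ := hT.1 l h
        exact hT.2 (h2 u hul.symm ▸ hu)
      ext x
      have := Finset.ext_iff.1 hST x
      simp only [Finset.mem_insert, Finset.mem_erase] at this
      by_cases hxv : x = v
      · subst hxv; tauto
      · by_cases hxl : x = l
        · subst hxl; tauto
        · tauto
  omega

/-- two leaves make the inequality strict -/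
lemma supp_gt {v l m : V} (hl : IsLeaf G l) (hvl : G.Adj v l) (hm : IsLeaf G m)
    (hvm : G.Adj v m) (hlm : l ≠ m) : 2 * cout G v < cin G v := by
  have h1 := leaf_half hl hvl.symm
  obtain ⟨s', h1', hl2⟩ := leaf_iff.1 hl
  obtain rfl := hl2 v hvl.symm
  obtain ⟨s', h1', hm2⟩ := leaf_iff.1 hm
  obtain rfl := hm2 v hvm.symm
  have h2 : cout G v < cout G l := by
    unfold cout
    have hmem : ∀ S ∈ (domSets G).filter fun S => v ∉ S, l ∈ S ∧ m ∈ S := by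
      intro S hS
      simp only [Finset.mem_filter, mem_dom] at hS
      constructor
      · by_contra h
        obtain ⟨u, hu, hul⟩ := hS.1 l h
        exact hS.2 (hl2 u hul.symm ▸ hu)
      · by_contra h
        obtain ⟨u, hu, hul⟩ := hS.1 m h
        exact hS.2 (hm2 u hul.symm ▸ hu)
    rw [← Finset.card_image_of_injOn (f := fun S => insert v (S.erase l))
      (s := (domSets G).filter fun S => v ∉ S)]
    · apply Finset.card_lt_card
      rw [Finset.ssubset_iff_of_subset]
      · refine ⟨(Finset.univ.erase l).erase m, ?_, ?_⟩
        · simp only [Finset.mem_filter, mem_dom]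
          refine ⟨?_, by simp⟩
          intro x hx
          refine ⟨v, by simp [hvl.ne, hvm.ne], ?_⟩
          simp only [Finset.mem_erase, Finset.mem_univ, and_true, not_and, not_not] at hx
          by_cases hxm : x = m
          · exact hxm ▸ hvm
          · exact hx hxm ▸ hvl
        · simp only [Finset.mem_image, not_exists, not_and]
          intro S hS h
          have := Finset.ext_iff.1 h m
          simp [(hmem S hS).2, hlm.symm] at this
      · intro T hT
        simp only [Finset.mem_image] at hT
        obtain ⟨S, hS', rfl⟩ := hT
        have hS := hS'
        simp only [Finset.mem_filter, mem_dom] at hS ⊢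
        refine ⟨?_, by simp [hvl.ne.symm]⟩
        intro x hx
        simp only [Finset.mem_insert, Finset.mem_erase, not_or] at hx
        by_cases hxl : x = l
        · subst hxl
          exact ⟨v, by simp, hvl⟩
        · obtain ⟨u, hu, hux⟩ := hS.1 x (by tauto)
          refine ⟨u, ?_, hux⟩
          have : u ≠ l := by
            rintro rfl
            exact hx.1 (hl2 x hux)
          simp [this, hu]
    · intro S hS T hT hST
      have hlS := (hmem S hS).1
      have hlT := (hmem T hT).1
      simp only [Finset.coe_filter, Set.mem_ofPred_eq] at hS hT
      ext x
      have := Finset.ext_iff.1 hST x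
      simp only [Finset.mem_insert, Finset.mem_erase] at this
      by_cases hxv : x = v
      · subst hxv; tauto
      · by_cases hxl : x = l
        · subst hxl; tauto
        · tauto
  omega

/-- a vertex outside `S` having a leaf neighbor has that leaf in `S` -/
lemma leaf_mem {S : Finset V} (hS : S ∈ domSets G) {x l : V} (hl : IsLeaf G l)
    (hxl : G.Adj x l) (hx : x ∉ S) : l ∈ S := by
  obtain ⟨s', h1, h2⟩ := leaf_iff.1 hl
  obtain rfl := h2 x hxl.symm
  by_contra h
  obtain ⟨u, hu, hul⟩ := mem_dom.1 hS l h
  exact hx (h2 u hul.symm ▸ hu)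

/-- support with exactly one leaf -/
lemma supp_one {v l : V} (hv : ¬ IsLeaf G v) (hl : IsLeaf G l) (hvl : G.Adj v l)
    (huniq : ∀ m, G.Adj v m → IsLeaf G m → m = l) :
    cin G v ≤ 2 * cout G v + ∑ u ∈ Finset.univ.filter (fun u => InR G u), cuq G u v := by
  set R := Finset.univ.filter (fun u : V => InR G u) with hR
  set P := (domSets G).filter fun S => v ∈ S ∧ ∀ u ∈ R, ¬ UQ G u v S with hP
  have hcov : (domSets G).filter (fun S => v ∈ S) ⊆
      P ∪ R.biUnion (fun u => (domSets G).filter fun S => UQ G u v S) := by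
    intro S hS
    simp only [Finset.mem_filter, hP, Finset.mem_union, Finset.mem_biUnion] at hS ⊢
    by_cases h : ∀ u ∈ R, ¬ UQ G u v S
    · left; exact ⟨hS.1, hS.2, h⟩
    · push Not at h
      obtain ⟨u, hu, h⟩ := h
      exact Or.inr ⟨u, hu, hS.1, h⟩
  have h1 : cin G v ≤ P.card + ∑ u ∈ R, cuq G u v := by
    unfold cin cuq
    refine (Finset.card_le_card hcov).trans ((Finset.card_union_le _ _).trans ?_)
    exact Nat.add_le_add_left Finset.card_biUnion_le _
  have key : ∀ S ∈ P, insert l (S.erase v) ∈ (domSets G).filter fun S => v ∉ S := by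
    intro S hS
    simp only [hP, Finset.mem_filter] at hS ⊢
    obtain ⟨hD, hvS, hno⟩ := hS
    refine ⟨mem_dom.2 ?_, by simp [hvl.ne]⟩
    intro x hx
    simp only [Finset.mem_insert, Finset.mem_erase, not_or] at hx
    by_cases hxv : x = v
    · subst hxv
      exact ⟨l, by simp, hvl.symm⟩
    have hxS : x ∉ S := by tauto
    by_contra hcon
    push Not at hcon
    have hu : UQ G x v S := by
      have hall : ∀ y ∈ S, (y = x ∨ G.Adj x y) → y = v := by
        intro y hy hyx
        by_contra hyv
        rcases hyx with rfl | hyx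
        · exact hxS hy
        · exact hcon y (by simp [hyv, hy]) hyx.symm
      obtain ⟨y, hy, hyx⟩ := mem_dom.1 hD x hxS
      have := hall y hy (Or.inr hyx.symm)
      subst this
      exact ⟨Or.inr hyx.symm, hvS, hall⟩
    have hxR : InR G x := by
      constructor
      · intro hlx
        have : G.Adj x v := hu.1.resolve_left (fun h => hxv h.symm)
        exact hx.1 (huniq x this.symm hlx)
      · intro y hxy hy
        have hyS := leaf_mem hD hy hxy hxS
        have := hu.2.2 y hyS (Or.inr hxy)
        subst this
        exact hv hy
    exact hno x (by simp [hR, hxR]) hu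
  have h2 : P.card ≤ 2 * cout G v := by
    rw [← Finset.card_filter_add_card_filter_not (s := P) (fun S => l ∈ S), two_mul]
    unfold cout
    apply Nat.add_le_add
    · apply Finset.card_le_card_of_injOn (fun S => insert l (S.erase v))
      · intro S hS
        exact key S (Finset.mem_filter.1 hS).1
      · intro S hS T hT hST
        simp only [hP, Finset.coe_filter, Finset.mem_filter, Set.mem_ofPred_eq] at hS hT
        ext x
        have := Finset.ext_iff.1 hST x
        simp only [Finset.mem_insert, Finset.mem_erase] at this
        by_cases hxv : x = v
        · subst hxv; tauto
        · by_cases hxl : x = l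
          · subst hxl; tauto
          · tauto
    · apply Finset.card_le_card_of_injOn (fun S => insert l (S.erase v))
      · intro S hS
        exact key S (Finset.mem_filter.1 hS).1
      · intro S hS T hT hST
        simp only [hP, Finset.coe_filter, Finset.mem_filter, Set.mem_ofPred_eq] at hS hT
        ext x
        have := Finset.ext_iff.1 hST x
        simp only [Finset.mem_insert, Finset.mem_erase] at this
        by_cases hxv : x = v
        · subst hxv; tauto
        · by_cases hxl : x = l
          · subst hxl; tauto
          · tauto
  omega

/-- critical vertices in `R` have a private neighbor in `R` -/
lemma crit_le {x : V} (hx : InR G x) :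
    cin G x ≤ cout G x + ∑ u ∈ Finset.univ.filter (fun u => InR G u), cuq G u x := by
  set R := Finset.univ.filter (fun u : V => InR G u) with hR
  set P := (domSets G).filter fun S => x ∈ S ∧ ∀ u ∈ R, ¬ UQ G u x S with hP
  have hcov : (domSets G).filter (fun S => x ∈ S) ⊆
      P ∪ R.biUnion (fun u => (domSets G).filter fun S => UQ G u x S) := by
    intro S hS
    simp only [Finset.mem_filter, hP, Finset.mem_union, Finset.mem_biUnion] at hS ⊢
    by_cases h : ∀ u ∈ R, ¬ UQ G u x S
    · left; exact ⟨hS.1, hS.2, h⟩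
    · push Not at h
      obtain ⟨u, hu, h⟩ := h
      exact Or.inr ⟨u, hu, hS.1, h⟩
  have h1 : cin G x ≤ P.card + ∑ u ∈ R, cuq G u x := by
    unfold cin cuq
    refine (Finset.card_le_card hcov).trans ((Finset.card_union_le _ _).trans ?_)
    exact Nat.add_le_add_left Finset.card_biUnion_le _
  have h2 : P.card ≤ cout G x := by
    unfold cout
    apply Finset.card_le_card_of_injOn (fun S => S.erase x)
    · intro S hS
      simp only [hP, Finset.coe_filter, Set.mem_ofPred_eq] at hS ⊢
      obtain ⟨hD, hxS, hno⟩ := hS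
      refine ⟨mem_dom.2 ?_, by simp⟩
      intro u hu
      by_contra hcon
      push Not at hcon
      have hall : ∀ y ∈ S, (y = u ∨ G.Adj u y) → y = x := by
        intro y hy hyu
        by_contra hyx
        rcases hyu with rfl | hyu
        · exact hu (by simp [hyx, hy])
        · exact hcon y (by simp [hyx, hy]) hyu.symm
      have hUQ : UQ G u x S := by
        by_cases hux : u = x
        · subst hux
          exact ⟨Or.inl rfl, hxS, hall⟩
        · have huS : u ∉ S := by simpa [hux] using hu
          obtain ⟨y, hy, hyu⟩ := mem_dom.1 hD u huS
          have := hall y hy (Or.inr hyu.symm)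
          subst this
          exact ⟨Or.inr hyu.symm, hxS, hall⟩
      have huR : InR G u := by
        by_cases hux : u = x
        · rwa [hux]
        have hadj : G.Adj u x := hUQ.1.resolve_left (fun h => hux h.symm)
        have huS : u ∉ S := by simpa [hux] using hu
        refine ⟨hx.2 u hadj.symm, ?_⟩
        intro y huy hy
        have hyS := leaf_mem hD hy huy huS
        have := hall y hyS (Or.inr huy)
        subst this
        exact hx.1 hy
      exact hno u (by simp [hR, huR]) hUQ
    · intro S hS T hT hST
      simp only [hP, Finset.coe_filter, Set.mem_ofPred_eq] at hS hT
      rw [← Finset.insert_erase hS.2.1, ← Finset.insert_erase hT.2.1]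
      exact congrArg _ hST
  omega

/-- uniquely dominated versus out -/
lemma uq_le_out (hiso : ∀ v : V, ∃ u, G.Adj v u) {u : V} (hu : ¬ IsLeaf G u) :
    ∑ x, cuq G u x ≤ cout G u := by
  obtain ⟨a, ha⟩ := hiso u
  have hb : ∃ b, G.Adj u b ∧ b ≠ a := by
    by_contra h
    push Not at h
    exact hu (leaf_iff.2 ⟨a, ha, h⟩)
  obtain ⟨b, hb, hba⟩ := hb
  let F : Finset V → Finset V := fun S => if u ∈ S then (S.erase u) ∪ G.neighborFinset u else S
  have hsum : ∑ x, cuq G u x =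
      (Finset.univ.biUnion fun x => (domSets G).filter fun S => UQ G u x S).card := by
    rw [Finset.card_biUnion]
    · rfl
    · intro x _ y _ hxy
      rw [Function.onFun, Finset.disjoint_left]
      intro S hS hS'
      simp only [Finset.mem_filter] at hS hS'
      exact hxy (hS'.2.2.2 x hS.2.2.1 hS.2.1)
  rw [hsum]
  unfold cout
  apply Finset.card_le_card_of_injOn F
  · intro S hS
    simp only [Finset.coe_biUnion, Set.mem_iUnion, Finset.coe_filter, Set.mem_ofPred_eq] at hS ⊢
    obtain ⟨x, -, hD, hx⟩ := hS
    by_cases huS : u ∈ S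
    · simp only [F, huS, if_true]
      refine ⟨mem_dom.2 ?_, by simp⟩
      intro y hy
      simp only [Finset.mem_union, Finset.mem_erase, SimpleGraph.mem_neighborFinset, not_or] at hy
      by_cases hyu : y = u
      · subst hyu
        exact ⟨a, by simp [ha], ha.symm⟩
      · obtain ⟨z, hz, hzy⟩ := mem_dom.1 hD y (by tauto)
        refine ⟨z, ?_, hzy⟩
        have : z ≠ u := by
          rintro rfl
          exact hy.2 hzy
        simp [this, hz]
    · simp only [F, huS, if_false]
      exact ⟨hD, by simpa using huS⟩
  · intro S hS T hT hST
    simp only [Finset.coe_biUnion, Set.mem_iUnion, Finset.coe_filter, Set.mem_ofPred_eq] at hS hT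
    obtain ⟨x, -, hD, hx⟩ := hS
    obtain ⟨y, -, hD', hy⟩ := hT
    have aux : ∀ (S T : Finset V) (x y : V), UQ G u x S → UQ G u y T → u ∈ S → u ∉ T →
        F S = F T → False := by
      intro S T x y hx hy hS hT h
      simp only [F, hS, hT, if_true, if_false] at h
      have h1 : a ∈ T := by rw [← h]; simp [ha]
      have h2 : b ∈ T := by rw [← h]; simp [hb]
      exact hba ((hy.2.2 b h2 (Or.inr hb)).trans (hy.2.2 a h1 (Or.inr ha)).symm)
    by_cases huS : u ∈ S
    · by_cases huT : u ∈ T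
      · simp only [F, huS, huT, if_true] at hST
        ext z
        have h := Finset.ext_iff.1 hST z
        simp only [Finset.mem_union, Finset.mem_erase, SimpleGraph.mem_neighborFinset] at h
        by_cases hzu : z = u
        · subst hzu; tauto
        by_cases hz : G.Adj u z
        · have e1 := hx.2.2 u huS (Or.inl rfl)
          have e2 := hy.2.2 u huT (Or.inl rfl)
          constructor
          · intro h'
            exact absurd ((hx.2.2 z h' (Or.inr hz)).trans e1.symm) hzu
          · intro h'
            exact absurd ((hy.2.2 z h' (Or.inr hz)).trans e2.symm) hzu
        · tauto
      · exact (aux S T x y hx hy huS huT hST).elim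
    · by_cases huT : u ∈ T
      · exact (aux T S y x hy hx huT huS hST.symm).elim
      · simpa only [F, huS, huT, if_false] using hST

/-- a forest has no nonempty set of minimum degree two -/
lemma forest_set (hG : G.IsAcyclic) (R : V → Prop) (u₀ : V) (h₀ : R u₀)
    (h : ∀ u, R u → ∃ a b, G.Adj u a ∧ G.Adj u b ∧ a ≠ b ∧ R a ∧ R b) : False := by
  have key : ∀ n : ℕ, ∃ (u v : V) (p : G.Walk u v), p.IsPath ∧ R u ∧ p.length = n := by
    intro n
    induction n with
    | zero => exact ⟨u₀, u₀, .nil, by simp, h₀, rfl⟩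
    | succ n ih =>
      obtain ⟨u, v, p, hp, hu, hn⟩ := ih
      obtain ⟨a, b, ha, hb, hab, hRa, hRb⟩ := h u hu
      have : ∃ c, G.Adj u c ∧ R c ∧ c ∉ p.support := by
        by_contra hcon
        push Not at hcon
        have h1 := hG.eq_snd_of_adj_start hp ha (hcon a ha hRa)
        have h2 := hG.eq_snd_of_adj_start hp hb (hcon b hb hRb)
        exact hab (h1.trans h2.symm)
      obtain ⟨c, hc, hRc, hcp⟩ := this
      exact ⟨c, v, .cons hc.symm p, by simp [SimpleGraph.Walk.cons_isPath_iff, hp, hcp], hRc,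
        by simp [hn]⟩
  obtain ⟨u, v, p, hp, -, hn⟩ := key (Fintype.card V)
  have := hp.length_lt
  omega

/-- positivity of the strict term -/
lemma uq_pos (hG : G.IsAcyclic) (hiso : ∀ v : V, ∃ u, G.Adj v u) {u s : V} (hu : InR G u)
    (hus : G.Adj u s) : 0 < cuq G u s := by
  unfold cuq
  refine Finset.card_pos.2 ⟨Finset.univ.filter fun y => y = s ∨ ¬ (y = u ∨ G.Adj u y), ?_⟩
  rw [Finset.mem_filter, mem_dom]
  simp only [Finset.mem_filter, UQ, Finset.mem_univ, true_and]
  refine ⟨?_, Or.inr hus, by simp, by tauto⟩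
  intro v hv
  push Not at hv
  obtain ⟨hvs, hv⟩ := hv
  by_cases hvu : v = u
  · subst hvu
    exact ⟨s, Or.inl rfl, hus.symm⟩
  have huv := hv.resolve_left hvu
  have hvl := hu.2 v huv
  have : ∃ b, G.Adj v b ∧ b ≠ u := by
    by_contra h
    push Not at h
    exact hvl (leaf_iff.2 ⟨u, huv.symm, h⟩)
  obtain ⟨b, hb, hbu⟩ := this
  refine ⟨b, Or.inr ?_, hb.symm⟩
  rintro (h | h)
  · exact hbu h
  · have := hG.cliqueFree (le_refl 3) {u, v, b}
    exact this (SimpleGraph.is3Clique_triple_iff.2 ⟨huv, h, hb⟩)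

/-- number of leaf neighbors -/
noncomputable def kk (G : SimpleGraph V) (v : V) : ℕ := (leafNbrSet G v).ncard

lemma kk_eq (v : V) : kk G v = (Finset.univ.filter fun l => G.Adj v l ∧ IsLeaf G l).card := by
  unfold kk leafNbrSet
  rw [← Set.ncard_coe_finset]
  simp

/-- twice the out minus in -/
noncomputable def gg (G : SimpleGraph V) (v : V) : ℤ := 2 * (cout G v : ℤ) - cin G v

lemma gg_leaf {l s : V} (hl : IsLeaf G l) (hs : G.Adj l s) : 2 * gg G l = - gg G s := by
  have h1 := leaf_half hl hs
  have h2 := cin_add_cout (G := G) l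
  have h3 := cin_add_cout (G := G) s
  unfold gg
  omega

lemma sum_gg (G : SimpleGraph V) :
    2 * ∑ v, gg G v = ∑ v ∈ Finset.univ.filter (fun v => ¬ IsLeaf G v), (2 - (kk G v : ℤ)) * gg G v := by
  have e1 : ∑ l ∈ Finset.univ.filter (fun l => IsLeaf G l), 2 * gg G l
      = - ∑ v, (kk G v : ℤ) * gg G v := by
    have : ∀ l ∈ Finset.univ.filter (fun l => IsLeaf G l), 2 * gg G l =
        - ∑ v, if G.Adj v l then gg G v else 0 := by
      intro l hl
      simp only [Finset.mem_filter, Finset.mem_univ, true_and] at hl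
      obtain ⟨s, hs, h2⟩ := leaf_iff.1 hl
      rw [gg_leaf hl hs, Finset.sum_eq_single s]
      · simp [hs.symm]
      · intro b _ hb
        rw [if_neg]
        intro h
        exact hb (h2 b h.symm)
      · simp
    rw [Finset.sum_congr rfl this, Finset.sum_neg_distrib, Finset.sum_comm]
    congr 1
    apply Finset.sum_congr rfl
    intro v _
    rw [kk_eq, ← Finset.sum_filter, Finset.filter_filter, Finset.sum_const, nsmul_eq_mul]
    congr 3
    ext; simp [and_comm]
  have e2 : ∑ v, (kk G v : ℤ) * gg G v =
      ∑ v ∈ Finset.univ.filter (fun v => ¬ IsLeaf G v), (kk G v : ℤ) * gg G v := by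
    rw [← Finset.sum_filter_add_sum_filter_not Finset.univ (fun v => IsLeaf G v)]
    rw [Finset.sum_eq_zero, zero_add]
    intro v hv
    simp only [Finset.mem_filter, Finset.mem_univ, true_and] at hv
    by_cases hk : kk G v = 0
    · simp [hk]
    · rw [kk_eq, ← Ne, Finset.card_ne_zero] at hk
      obtain ⟨l, hl⟩ := hk
      simp only [Finset.mem_filter, Finset.mem_univ, true_and] at hl
      have h1 := gg_leaf hv hl.1
      have h2 := gg_leaf hl.2 hl.1.symm
      have : gg G v = 0 := by omega
      simp [this]
  rw [← Finset.sum_filter_add_sum_filter_not Finset.univ (fun v => IsLeaf G v), mul_add,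
    Finset.mul_sum, e1, e2, Finset.mul_sum]
  simp_rw [sub_mul]
  rw [Finset.sum_sub_distrib]
  ring

lemma avd_iff (G : SimpleGraph V) :
    avd G = 2 * (Fintype.card V : ℚ) / 3 ↔ ∑ v, gg G v = 0 := by
  have hD : 0 < (domSets G).card := Finset.card_pos.2 ⟨_, univ_mem⟩
  have hD' : ((domSets G).card : ℚ) ≠ 0 := by positivity
  have h1 : ∑ v, gg G v = 2 * (Fintype.card V : ℤ) * (domSets G).card
      - 3 * ∑ v, (cin G v : ℤ) := by
    have : ∀ v, gg G v = 2 * ((domSets G).card : ℤ) - 3 * cin G v := by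
      intro v
      have := cin_add_cout (G := G) v
      unfold gg
      omega
    simp_rw [this]
    rw [Finset.sum_sub_distrib, Finset.mul_sum]
    simp
    ring
  have h2 : ∑ S ∈ domSets G, (S.card : ℚ) = ((∑ v, (cin G v : ℤ) : ℤ) : ℚ) := by
    have := sum_card (G := G)
    push_cast
    exact_mod_cast this
  unfold avd
  rw [h1, h2, div_eq_div_iff hD' (by norm_num)]
  constructor
  · intro h
    have : (∑ v, (cin G v : ℤ)) * 3 = 2 * (Fintype.card V : ℤ) * (domSets G).card := by
      exact_mod_cast h
    linarith
  · intro h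
    have : (∑ v, (cin G v : ℤ)) * 3 = 2 * (Fintype.card V : ℤ) * (domSets G).card := by
      linarith
    exact_mod_cast this

lemma kk_zero {v : V} : kk G v = 0 ↔ ∀ y, G.Adj v y → ¬ IsLeaf G y := by
  rw [kk_eq, Finset.card_eq_zero, Finset.filter_eq_empty_iff]
  simp

lemma term_one {v : V} (hv : ¬ IsLeaf G v) (hk : kk G v = 1) :
    gg G v ≤ 0 ∧ -((∑ u ∈ Finset.univ.filter (fun u => InR G u), cuq G u v : ℕ) : ℤ) ≤ gg G v := by
  rw [kk_eq, Finset.card_eq_one] at hk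
  obtain ⟨l, hl⟩ := hk
  have hmem : ∀ m, (G.Adj v m ∧ IsLeaf G m) ↔ m = l := by
    intro m
    have := Finset.ext_iff.1 hl m
    simpa using this
  obtain ⟨h1, h2⟩ := (hmem l).2 rfl
  have a1 := supp_ge h2 h1
  have a2 := supp_one hv h2 h1 (fun m hm hm' => (hmem m).1 ⟨hm, hm'⟩)
  unfold gg
  omega

lemma term_two {v : V} (hk : 2 ≤ kk G v) : gg G v < 0 := by
  rw [kk_eq] at hk
  obtain ⟨l, hl, m, hm, hlm⟩ := Finset.one_lt_card.1 hk
  simp only [Finset.mem_filter, Finset.mem_univ, true_and] at hl hm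
  have := supp_gt hl.2 hl.1 hm.2 hm.1 hlm
  unfold gg
  omega

lemma term_three {v : V} (hk : 3 ≤ kk G v) : 0 < (2 - (kk G v : ℤ)) * gg G v := by
  apply mul_pos_of_neg_of_neg
  · omega
  · exact term_two (by omega)

lemma sumR (hiso : ∀ v : V, ∃ u, G.Adj v u) :
    ∑ u ∈ Finset.univ.filter (fun u => InR G u),
      ∑ x ∈ Finset.univ.filter (fun x => ¬ InR G x), (cuq G u x : ℤ) ≤
    ∑ u ∈ Finset.univ.filter (fun u => InR G u), gg G u := by
  have h1 : ∑ x ∈ Finset.univ.filter (fun u => InR G u), ((cin G x : ℤ) - cout G x) ≤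
      ∑ x ∈ Finset.univ.filter (fun u => InR G u),
        ∑ u ∈ Finset.univ.filter (fun u => InR G u), (cuq G u x : ℤ) := by
    apply Finset.sum_le_sum
    intro x hx
    have := crit_le (G := G) (Finset.mem_filter.1 hx).2
    have h : (cin G x : ℤ) ≤ cout G x +
        ∑ u ∈ Finset.univ.filter (fun u => InR G u), (cuq G u x : ℤ) := by exact_mod_cast this
    linarith
  have h2 : ∑ u ∈ Finset.univ.filter (fun u => InR G u), ∑ x, (cuq G u x : ℤ) ≤
      ∑ u ∈ Finset.univ.filter (fun u => InR G u), (cout G u : ℤ) := by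
    apply Finset.sum_le_sum
    intro u hu
    have := uq_le_out hiso (Finset.mem_filter.1 hu).2.1
    exact_mod_cast this
  rw [Finset.sum_comm] at h1
  have h3 : ∑ u ∈ Finset.univ.filter (fun u => InR G u), ∑ x, (cuq G u x : ℤ) =
      ∑ u ∈ Finset.univ.filter (fun u => InR G u),
        ∑ x ∈ Finset.univ.filter (fun x => InR G x), (cuq G u x : ℤ) +
      ∑ u ∈ Finset.univ.filter (fun u => InR G u),
        ∑ x ∈ Finset.univ.filter (fun x => ¬ InR G x), (cuq G u x : ℤ) := by
    rw [← Finset.sum_add_distrib]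
    apply Finset.sum_congr rfl
    intro u _
    exact (Finset.sum_filter_add_sum_filter_not _ _ _).symm
  have h4 : ∑ u ∈ Finset.univ.filter (fun u => InR G u), gg G u =
      ∑ u ∈ Finset.univ.filter (fun u => InR G u), (cout G u : ℤ) -
      ∑ x ∈ Finset.univ.filter (fun u => InR G u), ((cin G x : ℤ) - cout G x) := by
    rw [← Finset.sum_sub_distrib]
    apply Finset.sum_congr rfl
    intro u _
    unfold gg
    ring
  linarith

lemma term_ge {v : V} (hv : ¬ IsLeaf G v) (hR : ¬ InR G v) :
    -(∑ u ∈ Finset.univ.filter (fun u => InR G u), (cuq G u v : ℤ)) ≤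
      (2 - (kk G v : ℤ)) * gg G v := by
  have hk : kk G v ≠ 0 := fun h => hR ⟨hv, kk_zero.1 h⟩
  have hnn : 0 ≤ ∑ u ∈ Finset.univ.filter (fun u => InR G u), (cuq G u v : ℤ) :=
    Finset.sum_nonneg (fun _ _ => by positivity)
  rcases (by omega : kk G v = 1 ∨ kk G v = 2 ∨ 3 ≤ kk G v) with h | h | h
  · have := (term_one hv h).2
    push_cast at this
    rw [h]
    norm_num
    linarith
  · rw [h]
    norm_num
    exact hnn
  · have := term_three h
    linarith

lemma total_ge (hiso : ∀ v : V, ∃ u, G.Adj v u) :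
    ∑ u ∈ Finset.univ.filter (fun u => InR G u),
      ∑ x ∈ Finset.univ.filter (fun x => ¬ InR G x), (cuq G u x : ℤ) ≤ 2 * ∑ v, gg G v := by
  have h0 := sumR hiso
  rw [sum_gg, ← Finset.sum_filter_add_sum_filter_not
    (Finset.univ.filter (fun v => ¬ IsLeaf G v)) (fun v => InR G v),
    Finset.filter_filter, Finset.filter_filter]
  have e1 : ∑ v ∈ Finset.univ.filter (fun v => ¬ IsLeaf G v ∧ InR G v),
      (2 - (kk G v : ℤ)) * gg G v =
      2 * ∑ u ∈ Finset.univ.filter (fun u => InR G u), gg G u := by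
    rw [Finset.mul_sum]
    apply Finset.sum_congr
    · ext v
      simp only [Finset.mem_filter, Finset.mem_univ, true_and]
      exact ⟨fun h => h.2, fun h => ⟨h.1, h⟩⟩
    · intro v hv
      simp only [Finset.mem_filter, Finset.mem_univ, true_and] at hv
      rw [kk_zero.2 hv.2]
      simp
  have e2 : -∑ v ∈ Finset.univ.filter (fun v => ¬ InR G v),
      ∑ u ∈ Finset.univ.filter (fun u => InR G u), (cuq G u v : ℤ) ≤
      ∑ v ∈ Finset.univ.filter (fun v => ¬ IsLeaf G v ∧ ¬ InR G v),
        (2 - (kk G v : ℤ)) * gg G v := by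
    have a : ∑ v ∈ Finset.univ.filter (fun v => ¬ IsLeaf G v ∧ ¬ InR G v),
        ∑ u ∈ Finset.univ.filter (fun u => InR G u), (cuq G u v : ℤ) ≤
        ∑ v ∈ Finset.univ.filter (fun v => ¬ InR G v),
        ∑ u ∈ Finset.univ.filter (fun u => InR G u), (cuq G u v : ℤ) := by
      apply Finset.sum_le_sum_of_subset_of_nonneg
      · intro v hv
        simp only [Finset.mem_filter, Finset.mem_univ, true_and] at hv ⊢
        exact hv.2
      · intro v _ _
        exact Finset.sum_nonneg (fun _ _ => by positivity)
    have b : -∑ v ∈ Finset.univ.filter (fun v => ¬ IsLeaf G v ∧ ¬ InR G v),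
        ∑ u ∈ Finset.univ.filter (fun u => InR G u), (cuq G u v : ℤ) ≤
        ∑ v ∈ Finset.univ.filter (fun v => ¬ IsLeaf G v ∧ ¬ InR G v),
        (2 - (kk G v : ℤ)) * gg G v := by
      rw [← Finset.sum_neg_distrib]
      apply Finset.sum_le_sum
      intro v hv
      simp only [Finset.mem_filter, Finset.mem_univ, true_and] at hv
      exact term_ge hv.1 hv.2
    linarith
  rw [Finset.sum_comm] at e2
  linarith

lemma noR (hG : G.IsAcyclic) (hiso : ∀ v : V, ∃ u, G.Adj v u) (h0 : ∑ v, gg G v = 0) (w : V) :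
    ¬ InR G w := by
  intro hw
  refine forest_set hG (InR G) w hw ?_
  intro u hu
  have hall : ∀ s, G.Adj u s → InR G s := by
    intro s hus
    by_contra hs
    have h1 := total_ge hiso (G := G)
    rw [h0] at h1
    have h2 : (cuq G u s : ℤ) ≤ ∑ u ∈ Finset.univ.filter (fun u => InR G u),
      ∑ x ∈ Finset.univ.filter (fun x => ¬ InR G x), (cuq G u x : ℤ) := by
      refine le_trans ?_ (Finset.single_le_sum (f := fun u =>
        ∑ x ∈ Finset.univ.filter (fun x => ¬ InR G x), (cuq G u x : ℤ))
        (fun _ _ => Finset.sum_nonneg (fun _ _ => by positivity)) (a := u) (by simp [hu]))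
      exact Finset.single_le_sum (f := fun x => (cuq G u x : ℤ))
        (fun _ _ => by positivity) (by simp [hs])
    have h3 := uq_pos hG hiso hu hus
    omega
  obtain ⟨a, ha⟩ := hiso u
  have hb : ∃ b, G.Adj u b ∧ b ≠ a := by
    by_contra h
    push Not at h
    exact hu.1 (leaf_iff.2 ⟨a, ha, h⟩)
  obtain ⟨b, hb, hba⟩ := hb
  exact ⟨a, b, ha, hb, hba.symm, hall a ha, hall b hb⟩

lemma term_nonneg (hR : ∀ w, ¬ InR G w) {v : V} (hv : ¬ IsLeaf G v) :
    0 ≤ (2 - (kk G v : ℤ)) * gg G v := by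
  have := term_ge hv (hR v)
  simpa [hR] using this

lemma main (hG : G.IsAcyclic) (hiso : ∀ v : V, ∃ u, G.Adj v u) :
    ∑ v, gg G v = 0 ↔ ∀ v : V, ¬ IsLeaf G v → (kk G v = 1 ∨ kk G v = 2) := by
  constructor
  · intro h0 v hv
    have hR := noR hG hiso h0
    have hs := sum_gg G
    rw [h0, mul_zero] at hs
    have hz := (Finset.sum_eq_zero_iff_of_nonneg (fun v hv => term_nonneg hR
      (Finset.mem_filter.1 hv).2)).1 hs.symm v (by simp [hv])
    have hk : kk G v ≠ 0 := fun h => hR v ⟨hv, kk_zero.1 h⟩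
    by_contra hcon
    have := term_three (G := G) (v := v) (by omega)
    omega
  · intro h
    have hR : ∀ w, ¬ InR G w := by
      intro w hw
      have h1 := kk_zero.2 hw.2
      have h2 := h w hw.1
      omega
    have hs := sum_gg G
    have hz : ∑ v ∈ Finset.univ.filter (fun v => ¬ IsLeaf G v),
        (2 - (kk G v : ℤ)) * gg G v = 0 := by
      apply Finset.sum_eq_zero
      intro v hv
      have hv := (Finset.mem_filter.1 hv).2
      rcases h v hv with hk | hk
      · have h1 := term_one hv hk
        have h2 : gg G v = 0 := by
          have h3 := h1.2
          simp [hR] at h3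
          exact le_antisymm h1.1 h3
        simp [h2]
      · rw [hk]
        norm_num
    rw [hz] at hs
    omega

end AvdAux

/-- For a forest `G` on `n` vertices with no isolated vertices, `avd G = 2n/3` iff every
non-leaf vertex of `G` is a support vertex with exactly one or two leaf neighbors. -/
theorem avd_forest_eq_iff {V : Type*} [Fintype V] (G : SimpleGraph V)
    (hforest : G.IsAcyclic) (hiso : ∀ v : V, ∃ u, G.Adj v u) :
    avd G = 2 * (Fintype.card V : ℚ) / 3 ↔
      ∀ v : V, ¬ IsLeaf G v →
        IsSupport G v ∧ ((leafNbrSet G v).ncard = 1 ∨ (leafNbrSet G v).ncard = 2) := by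
  rw [AvdAux.avd_iff, AvdAux.main hforest hiso]
  refine forall_congr' fun v => imp_congr_right fun hv => ?_
  constructor
  · intro h
    refine ⟨?_, h⟩
    by_contra hs
    have h0 : AvdAux.kk G v = 0 := AvdAux.kk_zero.2 fun y hy hl => hs ⟨y, hy, hl⟩
    omega
  · exact fun h => h.2
end

section
/- Let G be a tree of order n ≥ 2. Then avd(G) = 2n/3 if and only if every non-leaf vertex of G is a support vertex with exactly one or two leaf neighbors. -/
open scoped Classical

section helpers
variable {V : Type*} [Fintype V]

def Dm (G : SimpleGraph V) (S : Finset V) : Prop := ∀ v ∉ S, ∃ u ∈ S, G.Adj u v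

def Ntwo (G : SimpleGraph V) (S : Finset V) (v : V) : Prop :=
  v ∉ S ∧ ∃ y ∈ S, ∃ z ∈ S, y ≠ z ∧ G.Adj y v ∧ G.Adj z v

noncomputable def prv (G : SimpleGraph V) (S : Finset V) (u : V) : Finset V :=
  Finset.univ.filter fun x => x ∉ S ∧ G.Adj u x ∧ ∀ y ∈ S, G.Adj y x → y = u

def Atwo (G : SimpleGraph V) (S : Finset V) (u : V) : Prop :=
  u ∈ S ∧ (∀ y ∈ S, ¬ G.Adj y u) ∧ prv G S u = ∅

noncomputable def cN (G : SimpleGraph V) (v : V) : ℕ := ((domSets G).filter fun S => Ntwo G S v).card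
noncomputable def cA (G : SimpleGraph V) (v : V) : ℕ := ((domSets G).filter fun S => Atwo G S v).card
noncomputable def cP (G : SimpleGraph V) (v : V) : ℕ :=
  ((domSets G).filter fun S => v ∈ S ∧ (prv G S v).Nonempty).card
noncomputable def cS (G : SimpleGraph V) (v : V) : ℕ :=
  ∑ S ∈ (domSets G).filter (fun S => v ∈ S), ((prv G S v).card - 1)
noncomputable def cOut (G : SimpleGraph V) (v : V) : ℕ := ((domSets G).filter fun S => v ∉ S).card
noncomputable def cIn (G : SimpleGraph V) (v : V) : ℕ := ((domSets G).filter fun S => v ∈ S).card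

noncomputable def lf (G : SimpleGraph V) (w : V) : Finset V :=
  Finset.univ.filter fun v => G.Adj w v ∧ IsLeaf G v

theorem mem_domSets' (G : SimpleGraph V) (S : Finset V) : S ∈ domSets G ↔ Dm G S := by
  simp [domSets, Dm]

theorem leaf_unique (G : SimpleGraph V) {x v y : V} (hx : IsLeaf G x) (h : G.Adj x v)
    (h2 : G.Adj x y) : y = v := by
  unfold IsLeaf at hx
  rw [← SimpleGraph.card_neighborFinset_eq_degree, Finset.card_eq_one] at hx
  obtain ⟨a, ha⟩ := hx
  have h1 : v ∈ G.neighborFinset x := by simpa using h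
  have h3 : y ∈ G.neighborFinset x := by simpa using h2
  rw [ha] at h1 h3
  simp at h1 h3
  rw [h1, h3]

theorem crit_iff (G : SimpleGraph V) (S : Finset V) (u : V) (hS : Dm G S) (hu : u ∈ S) :
    ¬ Dm G (S.erase u) ↔ ((prv G S u).Nonempty ∨ Atwo G S u) := by
  constructor
  · intro h
    by_cases hp : (prv G S u).Nonempty
    · exact Or.inl hp
    right
    rw [Finset.not_nonempty_iff_eq_empty] at hp
    refine ⟨hu, ?_, hp⟩
    intro y hy hyu
    apply h
    intro v hv
    by_cases hvu : v = u
    · subst hvu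
      exact ⟨y, Finset.mem_erase.2 ⟨G.ne_of_adj hyu, hy⟩, hyu⟩
    have hvS : v ∉ S := fun h' => hv (Finset.mem_erase.2 ⟨hvu, h'⟩)
    by_contra hc
    push Not at hc
    have : v ∈ prv G S u := by
      have key : ∀ y ∈ S, G.Adj y v → y = u := by
        intro y hy hyv
        by_contra hne
        exact hc y (Finset.mem_erase.2 ⟨hne, hy⟩) hyv
      obtain ⟨z, hz, hzv⟩ := hS v hvS
      have := key z hz hzv
      subst this
      simp only [prv, Finset.mem_filter, Finset.mem_univ, true_and]
      exact ⟨hvS, hzv, key⟩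
    rw [hp] at this
    simp at this
  · rintro (⟨x, hx⟩ | ⟨_, h2, _⟩) hD
    · simp only [prv, Finset.mem_filter, Finset.mem_univ, true_and] at hx
      obtain ⟨y, hy, hyx⟩ := hD x (fun h => hx.1 (Finset.mem_of_mem_erase h))
      exact (Finset.mem_erase.1 hy).1 (hx.2.2 y (Finset.mem_of_mem_erase hy) hyx)
    · obtain ⟨y, hy, hyx⟩ := hD u (by simp)
      exact h2 y (Finset.mem_of_mem_erase hy) hyx

theorem Dm.mono (G : SimpleGraph V) {S T : Finset V} (h : S ⊆ T) (hS : Dm G S) : Dm G T := by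
  intro v hv
  obtain ⟨u, hu, h'⟩ := hS v (fun h' => hv (h h'))
  exact ⟨u, h hu, h'⟩

theorem out_eq (G : SimpleGraph V) (v : V) :
    cOut G v = ((domSets G).filter fun S => v ∈ S ∧ Dm G (S.erase v)).card := by
  unfold cOut
  refine Finset.card_bij' (fun S _ => insert v S) (fun S _ => S.erase v) ?_ ?_ ?_ ?_
  · intro S hS
    simp only [Finset.mem_filter, mem_domSets'] at hS ⊢
    refine ⟨Dm.mono G (Finset.subset_insert v S) hS.1, by simp, ?_⟩
    rw [Finset.erase_insert hS.2]; exact hS.1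
  · intro S hS
    simp only [Finset.mem_filter, mem_domSets'] at hS ⊢
    exact ⟨hS.2.2, by simp⟩
  · intro S hS
    simp only [Finset.mem_filter] at hS
    exact Finset.erase_insert hS.2
  · intro S hS
    simp only [Finset.mem_filter] at hS
    exact Finset.insert_erase hS.2.1

theorem in_eq (G : SimpleGraph V) (v : V) : cIn G v = cOut G v + cP G v + cA G v := by
  rw [out_eq]
  unfold cIn cP cA
  rw [← Finset.card_filter_add_card_filter_not (s := (domSets G).filter fun S => v ∈ S)
    (fun S => Dm G (S.erase v)), Finset.filter_filter, Finset.filter_filter, add_assoc]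
  congr 1
  rw [← Finset.card_union_of_disjoint]
  · congr 1
    ext S
    simp only [Finset.mem_filter, Finset.mem_union, mem_domSets']
    constructor
    · rintro ⟨h1, h2, h3⟩
      rcases (crit_iff G S v h1 h2).1 h3 with h | h
      · exact Or.inl ⟨h1, h2, h⟩
      · exact Or.inr ⟨h1, h⟩
    · rintro (⟨h1, h2, h⟩ | ⟨h1, h⟩)
      · exact ⟨h1, h2, (crit_iff G S v h1 h2).2 (Or.inl h)⟩
      · exact ⟨h1, h.1, (crit_iff G S v h1 h.1).2 (Or.inr h)⟩
  · rw [Finset.disjoint_filter]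
    rintro S _ ⟨_, h⟩ h2
    rw [h2.2.2] at h
    simp at h

theorem compl_eq (G : SimpleGraph V) (S : Finset V) (hS : Dm G S) :
    (Finset.univ.filter fun v => v ∉ S).card =
      (Finset.univ.filter fun v => Ntwo G S v).card + ∑ u ∈ S, (prv G S u).card := by
  rw [← Finset.card_biUnion, ← Finset.card_union_of_disjoint]
  · congr 1
    ext v
    simp only [Finset.mem_filter, Finset.mem_union, Finset.mem_univ, true_and, Finset.mem_biUnion,
      prv]
    constructor
    · intro hv
      obtain ⟨u, hu, huv⟩ := hS v hv
      by_cases h : ∀ y ∈ S, G.Adj y v → y = u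
      · exact Or.inr ⟨u, hu, hv, huv, h⟩
      · push Not at h
        obtain ⟨y, hy, hyv, hne⟩ := h
        exact Or.inl ⟨hv, y, hy, u, hu, hne, hyv, huv⟩
    · rintro (h | ⟨u, _, h, _⟩)
      · exact h.1
      · exact h
  · rw [Finset.disjoint_left]
    intro v h1 h2
    simp only [Finset.mem_filter, Finset.mem_univ, true_and, Finset.mem_biUnion, prv] at h1 h2
    obtain ⟨_, y, hy, z, hz, hne, a, b⟩ := h1
    obtain ⟨u, _, _, _, h⟩ := h2
    exact hne ((h y hy a).trans (h z hz b).symm)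
  · intro u hu u' hu' hne
    rw [Function.onFun, Finset.disjoint_left]
    intro v h1 h2
    simp only [Finset.mem_filter, Finset.mem_univ, true_and, prv] at h1 h2
    exact hne (h2.2.2 u hu h1.2.1)

theorem swap_card (G : SimpleGraph V) (p : Finset V → V → Prop) :
    ∑ v, ((domSets G).filter fun S => p S v).card =
      ∑ S ∈ domSets G, (Finset.univ.filter fun v => p S v).card := by
  simp only [Finset.card_filter]
  exact Finset.sum_comm

theorem sum_prv (G : SimpleGraph V) :
    ∑ S ∈ domSets G, ∑ u ∈ S, (prv G S u).card = ∑ u, (cP G u + cS G u) := by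
  have h1 : ∀ S ∈ domSets G, ∑ u ∈ S, (prv G S u).card =
      ∑ u, if u ∈ S then (prv G S u).card else 0 := by
    intro S _
    simp
  rw [Finset.sum_congr rfl h1, Finset.sum_comm]
  apply Finset.sum_congr rfl
  intro u _
  unfold cP cS
  rw [← Finset.sum_filter, ← Finset.filter_filter, Finset.card_filter, ← Finset.sum_add_distrib]
  apply Finset.sum_congr rfl
  intro S _
  split_ifs with h
  · have := Finset.card_pos.2 h
    omega
  · rw [Finset.not_nonempty_iff_eq_empty] at h
    simp [h]

theorem sum_out (G : SimpleGraph V) :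
    ∑ v, cOut G v = ∑ v, (cN G v + cP G v + cS G v) := by
  have : ∑ v, cOut G v = ∑ S ∈ domSets G, (Finset.univ.filter fun v => v ∉ S).card := by
    simp only [cOut]
    convert swap_card G (fun S v => v ∉ S)
  rw [this, Finset.sum_congr rfl (fun S hS => compl_eq G S ((mem_domSets' G S).1 hS)),
    Finset.sum_add_distrib, sum_prv, ← swap_card G (fun S v => Ntwo G S v), ← Finset.sum_add_distrib]
  apply Finset.sum_congr rfl
  intro v _
  unfold cN
  ring

theorem key_sum (G : SimpleGraph V) :
    2 * (Fintype.card V : ℤ) * (domSets G).card - 3 * ∑ S ∈ domSets G, (S.card : ℤ) =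
      ∑ v, ((cN G v : ℤ) + cS G v - cA G v) := by
  have h1 : ∑ v, cIn G v = ∑ S ∈ domSets G, S.card := by
    have : ∑ v, cIn G v = ∑ S ∈ domSets G, (Finset.univ.filter fun v => v ∈ S).card := by
      simp only [cIn]
      convert swap_card G (fun S v => v ∈ S)
    simpa using this
  have h2 : ∑ v, (cIn G v + cOut G v) = Fintype.card V * (domSets G).card := by
    have : ∀ v, cIn G v + cOut G v = (domSets G).card := fun v =>
      Finset.card_filter_add_card_filter_not (s := domSets G) (fun S => v ∈ S)
    simp [this]
  have h3 := sum_out G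
  have h4 : ∑ v, cIn G v = ∑ v, (cOut G v + cP G v + cA G v) :=
    Finset.sum_congr rfl (fun v _ => in_eq G v)
  simp only [Finset.sum_add_distrib, Finset.sum_sub_distrib] at *
  zify at *
  linarith

theorem leaf_sum (G : SimpleGraph V) (f : V → ℤ) :
    ∑ v, (if IsLeaf G v then f v else 0) = ∑ w, ∑ x ∈ lf G w, f x := by
  simp only [lf, Finset.sum_filter]
  rw [Finset.sum_comm]
  apply Finset.sum_congr rfl
  intro x _
  split_ifs with h
  · have h' := h
    unfold IsLeaf at h'
    rw [← SimpleGraph.card_neighborFinset_eq_degree, Finset.card_eq_one] at h'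
    obtain ⟨a, ha⟩ := h'
    have hax : G.Adj x a := by
      have : a ∈ G.neighborFinset x := by rw [ha]; simp
      simpa using this
    rw [Finset.sum_eq_single a]
    · simp [hax.symm, h]
    · intro b _ hb
      have : ¬ G.Adj b x := fun hbx => hb (leaf_unique G h hax hbx.symm)
      simp [this]
    · simp
  · simp [h]

theorem leaf_A (G : SimpleGraph V) (v x : V) (hx : x ∈ lf G v) : cA G x = cN G v := by
  simp only [lf, Finset.mem_filter, Finset.mem_univ, true_and] at hx
  obtain ⟨hvx, hl⟩ := hx
  unfold cA cN
  congr 1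
  apply Finset.filter_congr
  intro S hS
  rw [mem_domSets'] at hS
  constructor
  · rintro ⟨h1, h2, h3⟩
    have hv : v ∉ S := fun h => h2 v h hvx
    refine ⟨hv, ?_⟩
    have : v ∉ prv G S x := by rw [h3]; simp
    simp only [prv, Finset.mem_filter, Finset.mem_univ, true_and] at this
    push Not at this
    obtain ⟨y, hy, hyv, hne⟩ := this hv hvx.symm
    exact ⟨y, hy, x, h1, hne, hyv, hvx.symm⟩
  · rintro ⟨hv, y, hy, z, hz, hne, hyv, hzv⟩
    have nb : ∀ u, G.Adj u x → u = v := fun u hu => leaf_unique G hl hvx.symm hu.symm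
    refine ⟨?_, ?_, ?_⟩
    · by_contra hxS
      obtain ⟨u, hu, hux⟩ := hS x hxS
      exact hv (nb u hux ▸ hu)
    · intro u hu hux
      exact hv (nb u hux ▸ hu)
    · rw [Finset.eq_empty_iff_forall_notMem]
      intro u hu
      simp only [prv, Finset.mem_filter, Finset.mem_univ, true_and] at hu
      have := nb u hu.2.1.symm
      subst this
      exact hne ((hu.2.2 y hy hyv).trans (hu.2.2 z hz hzv).symm)

noncomputable def tt (G : SimpleGraph V) (v : V) : ℤ :=
  (cN G v : ℤ) + cS G v - (if IsLeaf G v then 0 else (cA G v : ℤ)) - (lf G v).card * cN G v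

theorem key_sum' (G : SimpleGraph V) :
    2 * (Fintype.card V : ℤ) * (domSets G).card - 3 * ∑ S ∈ domSets G, (S.card : ℤ) =
      ∑ v, tt G v := by
  rw [key_sum]
  have h := leaf_sum G (fun v => (cA G v : ℤ))
  have h2 : ∀ w, ∑ x ∈ lf G w, (cA G x : ℤ) = (lf G w).card * cN G w := by
    intro w
    rw [Finset.sum_congr rfl (fun x hx => by rw [leaf_A G w x hx])]
    simp
  simp only [h2] at h
  have h3 : ∀ v, (cA G v : ℤ) = (if IsLeaf G v then 0 else (cA G v : ℤ)) +
      (if IsLeaf G v then (cA G v : ℤ) else 0) := by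
    intro v; split_ifs <;> simp
  have h4 : ∑ v, (cA G v : ℤ) = ∑ v, (if IsLeaf G v then 0 else (cA G v : ℤ)) +
      ∑ v, (if IsLeaf G v then (cA G v : ℤ) else 0) := by
    rw [← Finset.sum_add_distrib]
    exact Finset.sum_congr rfl (fun v _ => h3 v)
  simp only [tt, Finset.sum_add_distrib, Finset.sum_sub_distrib]
  linarith

theorem mem_lf (G : SimpleGraph V) (w x : V) : x ∈ lf G w ↔ G.Adj w x ∧ IsLeaf G x := by
  simp [lf]

theorem supp_A (G : SimpleGraph V) (v x : V) (hx : x ∈ lf G v) : cA G v = 0 := by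
  rw [mem_lf] at hx
  unfold cA
  rw [Finset.card_eq_zero, Finset.filter_eq_empty_iff]
  rintro S hS ⟨h1, h2, h3⟩
  have hxS : x ∉ S := fun h => h2 x h hx.1.symm
  have : x ∈ prv G S v := by
    simp only [prv, Finset.mem_filter, Finset.mem_univ, true_and]
    exact ⟨hxS, hx.1, fun y _ hy => leaf_unique G hx.2 hx.1.symm hy.symm⟩
  rw [h3] at this
  simp at this

theorem leaf_N (G : SimpleGraph V) (v : V) (hv : IsLeaf G v) : cN G v = 0 := by
  unfold cN
  rw [Finset.card_eq_zero, Finset.filter_eq_empty_iff]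
  rintro S hS ⟨_, y, _, z, _, hne, h1, h2⟩
  exact hne (leaf_unique G hv h2.symm h1.symm)

theorem leaf_prv (G : SimpleGraph V) (v : V) (hv : IsLeaf G v) (S : Finset V) :
    (prv G S v).card ≤ 1 := by
  rw [Finset.card_le_one]
  intro a ha b hb
  simp only [prv, Finset.mem_filter, Finset.mem_univ, true_and] at ha hb
  exact leaf_unique G hv hb.2.1 ha.2.1

theorem leaf_S (G : SimpleGraph V) (v : V) (hv : IsLeaf G v) : cS G v = 0 := by
  unfold cS
  apply Finset.sum_eq_zero
  intro S _
  have := leaf_prv G v hv S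
  omega

theorem tt_leaf (G : SimpleGraph V) (v : V) (hv : IsLeaf G v) : tt G v = 0 := by
  simp [tt, hv, leaf_N, leaf_S]

/-- sets containing `w` and none of its leaves -/
noncomputable def EE (G : SimpleGraph V) (w : V) : Finset (Finset V) :=
  (domSets G).filter fun S => w ∈ S ∧ Disjoint S (lf G w)

theorem leaf_not_mem {G : SimpleGraph V} {w : V} : w ∉ lf G w := by
  rw [mem_lf]; exact fun h => G.irrefl h.1

theorem N_leaves (G : SimpleGraph V) (w : V) (S : Finset V) (hS : Dm G S) (hw : w ∉ S) :
    lf G w ⊆ S := by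
  intro x hx
  rw [mem_lf] at hx
  by_contra h
  obtain ⟨u, hu, hux⟩ := hS x h
  exact hw (leaf_unique G hx.2 hx.1.symm hux.symm ▸ hu)

theorem N_le_E (G : SimpleGraph V) (w : V) : cN G w ≤ (EE G w).card := by
  unfold cN EE
  apply Finset.card_le_card_of_injOn (fun S => insert w (S \ lf G w))
  · intro S hS
    simp only [Finset.coe_filter, Set.mem_ofPred_eq, mem_domSets'] at hS ⊢
    refine ⟨?_, by simp, ?_⟩
    · intro v hv
      simp only [Finset.mem_insert, Finset.mem_sdiff, not_or, not_and, not_not] at hv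
      by_cases hvS : v ∈ S
      · have := (mem_lf G w v).1 (hv.2 hvS)
        exact ⟨w, by simp, this.1⟩
      · obtain ⟨u, hu, huv⟩ := hS.1 v hvS
        by_cases hul : u ∈ lf G w
        · exfalso
          rw [mem_lf] at hul
          exact hv.1 (leaf_unique G hul.2 hul.1.symm huv)
        · exact ⟨u, by simp [hu, hul], huv⟩
    · rw [Finset.disjoint_left]
      intro a ha hb
      simp only [Finset.mem_insert, Finset.mem_sdiff] at ha
      rcases ha with rfl | ha
      · exact leaf_not_mem hb
      · exact ha.2 hb
  · intro S hS T hT h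
    simp only [Finset.coe_filter, Set.mem_ofPred_eq, mem_domSets'] at hS hT
    have a := N_leaves G w S hS.1 hS.2.1
    have b := N_leaves G w T hT.1 hT.2.1
    have hw := hS.2.1
    have hw' := hT.2.1
    ext x
    have := Finset.ext_iff.1 h x
    simp only [Finset.mem_insert, Finset.mem_sdiff] at this
    by_cases hx : x ∈ lf G w
    · exact ⟨fun _ => b hx, fun _ => a hx⟩
    · by_cases hxw : x = w
      · subst hxw; simp [hw, hw']
      · simpa [hx, hxw] using this

theorem prv_leaves (G : SimpleGraph V) (w : V) (S : Finset V) : lf G w \ S ⊆ prv G S w := by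
  intro x hx
  simp only [Finset.mem_sdiff, mem_lf] at hx
  simp only [prv, Finset.mem_filter, Finset.mem_univ, true_and]
  exact ⟨hx.2, hx.1.1, fun y _ hy => leaf_unique G hx.1.2 hx.1.1.symm hy.symm⟩

theorem E_sub (G : SimpleGraph V) (w : V) :
    EE G w ⊆ (domSets G).filter (fun S => w ∈ S) := by
  intro S hS
  simp only [EE, Finset.mem_filter] at hS ⊢
  exact ⟨hS.1, hS.2.1⟩

theorem E_prv (G : SimpleGraph V) (w : V) (S : Finset V) (hS : S ∈ EE G w) :
    (lf G w).card ≤ (prv G S w).card := by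
  apply Finset.card_le_card
  refine subset_trans ?_ (prv_leaves G w S)
  simp only [EE, Finset.mem_filter] at hS
  exact (Finset.sdiff_eq_self_of_disjoint hS.2.2.symm).symm.subset

theorem E_le_S (G : SimpleGraph V) (w : V) : (EE G w).card * ((lf G w).card - 1) ≤ cS G w := by
  unfold cS
  refine le_trans ?_ (Finset.sum_le_sum_of_subset (E_sub G w))
  rw [← smul_eq_mul]
  apply Finset.card_nsmul_le_sum
  intro S hS
  have := E_prv G w S hS
  omega

theorem E_lt_S (G : SimpleGraph V) (w : V) (h3 : 3 ≤ (lf G w).card) :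
    (EE G w).card * ((lf G w).card - 1) < cS G w := by
  obtain ⟨a, b, c, ha, hb, hc, hab, hac, hbc⟩ := Finset.two_lt_card_iff.1 h3
  set S : Finset V := Finset.univ \ {a, b} with hSdef
  have hwS : w ∈ S := by
    have h1 : w ≠ a := fun h => leaf_not_mem (h ▸ ha : w ∈ lf G w)
    have h2 : w ≠ b := fun h => leaf_not_mem (h ▸ hb : w ∈ lf G w)
    simp [hSdef, h1, h2]
  have hcS : c ∈ S := by simp [hSdef, hac.symm, hbc.symm]
  have hSE : S ∉ EE G w := by
    intro h
    simp only [EE, Finset.mem_filter] at h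
    exact Finset.disjoint_left.1 h.2.2 hcS hc
  have hSD : Dm G S := by
    intro v hv
    simp only [hSdef, Finset.mem_sdiff, Finset.mem_univ, true_and, not_not, Finset.mem_insert,
      Finset.mem_singleton] at hv
    rcases hv with rfl | rfl
    · exact ⟨w, hwS, ((mem_lf _ _ _).1 ha).1⟩
    · exact ⟨w, hwS, ((mem_lf _ _ _).1 hb).1⟩
  have hp : 2 ≤ (prv G S w).card := by
    rw [← Finset.card_pair hab]
    apply Finset.card_le_card
    refine subset_trans ?_ (prv_leaves G w S)
    intro x hx
    have hx' : x ∉ S := by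
      simp only [hSdef, Finset.mem_sdiff, Finset.mem_univ, true_and, not_not]
      exact hx
    simp only [Finset.mem_insert, Finset.mem_singleton] at hx
    rw [Finset.mem_sdiff]
    rcases hx with rfl | rfl
    · exact ⟨ha, hx'⟩
    · exact ⟨hb, hx'⟩
  have hsub : insert S (EE G w) ⊆ (domSets G).filter (fun S => w ∈ S) := by
    apply Finset.insert_subset _ (E_sub G w)
    simp [mem_domSets', hSD, hwS]
  unfold cS
  refine lt_of_lt_of_le ?_ (Finset.sum_le_sum_of_subset hsub)
  rw [Finset.sum_insert hSE]
  have : (EE G w).card * ((lf G w).card - 1) ≤ ∑ S ∈ EE G w, ((prv G S w).card - 1) := by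
    rw [← smul_eq_mul]
    apply Finset.card_nsmul_le_sum
    intro S hS
    have := E_prv G w S hS
    omega
  omega

theorem tt_supp (G : SimpleGraph V) (v x : V) (hx : x ∈ lf G v) :
    tt G v = cS G v - (cN G v * ((lf G v).card - 1) : ℕ) := by
  have h1 := Finset.card_pos.2 ⟨x, hx⟩
  simp only [tt, supp_A G v x hx]
  push_cast [Nat.cast_sub h1]
  simp
  ring

theorem tt_supp_nonneg (G : SimpleGraph V) (v x : V) (hx : x ∈ lf G v) : 0 ≤ tt G v := by
  rw [tt_supp G v x hx]
  have h1 := Nat.mul_le_mul_right ((lf G v).card - 1) (N_le_E G v)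
  have := E_le_S G v
  omega

theorem tt_supp_pos (G : SimpleGraph V) (v : V) (h3 : 3 ≤ (lf G v).card) : 0 < tt G v := by
  obtain ⟨x, hx⟩ := Finset.card_pos.1 (show 0 < (lf G v).card by omega)
  rw [tt_supp G v x hx]
  have h1 := Nat.mul_le_mul_right ((lf G v).card - 1) (N_le_E G v)
  have := E_lt_S G v h3
  omega

theorem tt_other (G : SimpleGraph V) (v : V) (hl : ¬ IsLeaf G v) (hs : lf G v = ∅)
    (hiso : ∃ x, G.Adj v x) : 0 < tt G v := by
  obtain ⟨x, hvx⟩ := hiso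
  have hy : ∃ y, G.Adj v y ∧ y ≠ x := by
    by_contra hc
    push Not at hc
    apply hl
    unfold IsLeaf
    rw [← SimpleGraph.card_neighborFinset_eq_degree, Finset.card_eq_one]
    refine ⟨x, ?_⟩
    ext z
    simp only [SimpleGraph.mem_neighborFinset, Finset.mem_singleton]
    exact ⟨hc z, fun h => h ▸ hvx⟩
  obtain ⟨y, hvy, hyx⟩ := hy
  have hlt : cA G v < cN G v := by
    unfold cA cN
    set S0 : Finset V := Finset.univ.filter fun z => G.Adj v z ∨ (z ≠ v ∧ ¬ G.Adj x z) with hS0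
    have memS0 : ∀ z, z ∈ S0 ↔ G.Adj v z ∨ (z ≠ v ∧ ¬ G.Adj x z) := by intro z; simp [hS0]
    have hS0D : S0 ∈ (domSets G).filter fun S => Ntwo G S v := by
      simp only [Finset.mem_filter, mem_domSets']
      refine ⟨?_, ?_, x, ?_, y, ?_, hyx.symm, hvx.symm, hvy.symm⟩
      · intro z hz
        rw [memS0] at hz
        refine ⟨x, (memS0 x).2 (Or.inl hvx), ?_⟩
        by_cases hzv : z = v
        · subst hzv; exact hvx.symm
        · by_contra hxz
          exact hz (Or.inr ⟨hzv, hxz⟩)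
      · rw [memS0]; simp
      · rw [memS0]; exact Or.inl hvx
      · rw [memS0]; exact Or.inl hvy
    rw [← Nat.succ_le_iff, Nat.succ_eq_add_one]
    rw [← Finset.card_erase_add_one hS0D]
    apply Nat.succ_le_succ
    apply Finset.card_le_card_of_injOn (fun S => S.erase v ∪ G.neighborFinset v)
    · intro S hS
      simp only [Finset.coe_filter, Set.mem_ofPred_eq, mem_domSets'] at hS
      obtain ⟨hD, hvS, hnb, hp⟩ := hS
      have hcover : ∀ z, z ≠ v → ∃ u ∈ S, u ≠ v ∧ (u = z ∨ G.Adj u z) := by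
        intro z hz
        by_cases hzS : z ∈ S
        · exact ⟨z, hzS, hz, Or.inl rfl⟩
        · by_contra hc
          push Not at hc
          have : z ∈ prv G S v := by
            simp only [prv, Finset.mem_filter, Finset.mem_univ, true_and]
            have hk : ∀ u ∈ S, G.Adj u z → u = v := by
              intro u hu huz
              by_contra hne
              exact (hc u hu hne).2 huz
            obtain ⟨u, hu, huz⟩ := hD z hzS
            exact ⟨hzS, hk u hu huz ▸ huz, hk⟩
          rw [hp] at this
          simp at this
      simp only [Finset.coe_erase, Finset.coe_filter, Set.mem_sdiff, Set.mem_ofPred_eq,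
        Set.mem_singleton_iff, mem_domSets']
      refine ⟨⟨?_, ?_, x, ?_, y, ?_, hyx.symm, hvx.symm, hvy.symm⟩, ?_⟩
      · intro z hz
        by_cases hzv : z = v
        · subst hzv
          exact ⟨x, by simp [hvx], hvx.symm⟩
        · obtain ⟨u, hu, huv, h⟩ := hcover z hzv
          have hu' : u ∈ S.erase v ∪ G.neighborFinset v := by simp [hu, huv]
          rcases h with rfl | h
          · exact absurd hu' hz
          · exact ⟨u, hu', h⟩
      · simp
      · simp [hvx]
      · simp [hvy]
      · intro heq
        obtain ⟨u, hu, huv, h⟩ := hcover x (G.ne_of_adj hvx).symm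
        have hnv : ¬ G.Adj v u := fun h' => hnb u hu h'.symm
        have hu' : u ∈ S0 := by rw [← heq]; simp [hu, huv]
        rw [memS0] at hu'
        rcases h with rfl | h
        · exact hnv hvx
        · rcases hu' with h' | h'
          · exact hnv h'
          · exact h'.2 h.symm
    · intro S hS T hT h
      simp only [Finset.coe_filter, Set.mem_ofPred_eq] at hS hT
      obtain ⟨-, hvS, hnS, -⟩ := hS
      obtain ⟨-, hvT, hnT, -⟩ := hT
      ext z
      have := Finset.ext_iff.1 h z
      simp only [Finset.mem_union, Finset.mem_erase, SimpleGraph.mem_neighborFinset] at this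
      by_cases hz : z = v
      · subst hz; simp [hvS, hvT]
      · by_cases hvz : G.Adj v z
        · exact ⟨fun h => absurd hvz.symm (hnS z h), fun h => absurd hvz.symm (hnT z h)⟩
        · simpa [hz, hvz] using this
  simp only [tt, hl, hs, if_false, Finset.card_empty]
  have : 0 ≤ cS G v := Nat.zero_le _
  push_cast
  omega

theorem tt_zero (G : SimpleGraph V) (H : ∀ v, IsLeaf G v ∨ (lf G v).Nonempty) (v : V)
    (h2 : (lf G v).card ≤ 2) : tt G v = 0 := by
  by_cases hl : IsLeaf G v
  · exact tt_leaf G v hl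
  obtain ⟨x, hx⟩ := (H v).resolve_left hl
  rw [tt_supp G v x hx]
  have hprv : ∀ S ∈ (domSets G).filter (fun S => v ∈ S), prv G S v = lf G v \ S := by
    intro S hS
    simp only [Finset.mem_filter, mem_domSets'] at hS
    apply Finset.Subset.antisymm _ (prv_leaves G v S)
    intro z hz
    simp only [prv, Finset.mem_filter, Finset.mem_univ, true_and] at hz
    simp only [Finset.mem_sdiff, mem_lf]
    refine ⟨⟨hz.2.1, ?_⟩, hz.1⟩
    by_contra hzl
    obtain ⟨y, hy⟩ := (H z).resolve_left hzl
    have hyS := N_leaves G z S hS.1 hz.1 hy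
    rw [mem_lf] at hy
    have := hz.2.2 y hyS hy.1.symm
    exact hl (this ▸ hy.2)
  have h1 := Finset.card_pos.2 ⟨x, hx⟩
  have hcS : cS G v = ∑ S ∈ (domSets G).filter (fun S => v ∈ S), ((lf G v \ S).card - 1) := by
    unfold cS
    exact Finset.sum_congr rfl (fun S hS => by rw [hprv S hS])
  rcases (show (lf G v).card = 1 ∨ (lf G v).card = 2 by omega) with hc | hc
  · have : cS G v = 0 := by
      rw [hcS]
      apply Finset.sum_eq_zero
      intro S _
      have := Finset.card_le_card (Finset.sdiff_subset (s := lf G v) (t := S))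
      omega
    rw [this, hc]; simp
  · have hS : cS G v = (EE G v).card := by
      rw [hcS]
      have : EE G v = ((domSets G).filter (fun S => v ∈ S)).filter
          (fun S => Disjoint S (lf G v)) := by
        rw [Finset.filter_filter]; rfl
      rw [this, Finset.card_filter]
      apply Finset.sum_congr rfl
      intro S _
      split_ifs with hd
      · rw [Finset.sdiff_eq_self_of_disjoint hd.symm, hc]
      · have : (lf G v \ S).card < (lf G v).card := by
          apply Finset.card_lt_card
          rw [Finset.ssubset_iff_subset_ne]
          refine ⟨Finset.sdiff_subset, fun h => hd ?_⟩
          exact (Finset.sdiff_eq_self_iff_disjoint.1 h).symm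
        omega
    have hE : (EE G v).card ≤ cN G v := by
      unfold cN
      apply Finset.card_le_card_of_injOn (fun S => S.erase v ∪ lf G v)
      · intro S hS
        simp only [EE, Finset.coe_filter, Set.mem_ofPred_eq, mem_domSets'] at hS ⊢
        obtain ⟨a, b, hab, hlf⟩ := Finset.card_eq_two.1 hc
        have ha : a ∈ lf G v := by rw [hlf]; simp
        have hb : b ∈ lf G v := by rw [hlf]; simp
        have haj := ((mem_lf _ _ _).1 ha).1
        have hbj := ((mem_lf _ _ _).1 hb).1
        refine ⟨?_, ?_, a, by simp [ha], b, by simp [hb], hab, haj.symm, hbj.symm⟩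
        · intro z hz
          simp only [Finset.mem_union, Finset.mem_erase, not_or, not_and] at hz
          by_cases hzv : z = v
          · subst hzv
            exact ⟨a, by simp [ha], haj.symm⟩
          have hzS := hz.1 hzv
          by_cases hzl : IsLeaf G z
          · obtain ⟨u, hu, huz⟩ := hS.1 z hzS
            have huv : u ≠ v := by
              rintro rfl
              exact hz.2 ((mem_lf _ _ _).2 ⟨huz, hzl⟩)
            exact ⟨u, by simp [hu, huv], huz⟩
          · obtain ⟨y, hy⟩ := (H z).resolve_left hzl
            have hyS := N_leaves G z S hS.1 hzS hy
            rw [mem_lf] at hy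
            have hyv : y ≠ v := by
              rintro rfl
              exact hl hy.2
            exact ⟨y, by simp [hyS, hyv], hy.1.symm⟩
        · simp [leaf_not_mem]
      · intro S hS T hT h
        simp only [EE, Finset.coe_filter, Set.mem_ofPred_eq] at hS hT
        obtain ⟨-, hvS, hdS⟩ := hS
        obtain ⟨-, hvT, hdT⟩ := hT
        ext z
        have := Finset.ext_iff.1 h z
        simp only [Finset.mem_union, Finset.mem_erase] at this
        by_cases hz : z = v
        · subst hz; simp [hvS, hvT]
        · by_cases hvz : z ∈ lf G v
          · exact ⟨fun h => absurd hvz (Finset.disjoint_left.1 hdS h),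
              fun h => absurd hvz (Finset.disjoint_left.1 hdT h)⟩
          · simpa [hz, hvz] using this
    have := N_le_E G v
    rw [hS, hc]
    simp
    omega

end helpers

/-- For a tree `G` of order `n ≥ 2`, `avd G = 2n/3` iff every non-leaf vertex of `G` is a
support vertex with exactly one or two leaf neighbors. -/
theorem avd_tree_eq_iff {V : Type*} [Fintype V] (G : SimpleGraph V)
    (htree : G.IsTree) (hn : 2 ≤ Fintype.card V) :
    avd G = 2 * (Fintype.card V : ℚ) / 3 ↔
      ∀ v : V, ¬ IsLeaf G v →
        IsSupport G v ∧ ((leafNbrSet G v).ncard = 1 ∨ (leafNbrSet G v).ncard = 2) := by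
  have hiso : ∀ v, ∃ x, G.Adj v x := by
    intro v
    have : Nontrivial V := Fintype.one_lt_card_iff_nontrivial.1 hn
    exact htree.1.preconnected.exists_adj_of_nontrivial v
  have hlf : ∀ v, (leafNbrSet G v).ncard = (lf G v).card := by
    intro v
    rw [← Set.ncard_coe_finset]
    congr 1
    ext x
    simp [leafNbrSet, lf]
  have hsup : ∀ v, IsSupport G v ↔ (lf G v).Nonempty := by
    intro v
    simp only [IsSupport, Finset.Nonempty, mem_lf]
  have hD : 0 < (domSets G).card := by
    apply Finset.card_pos.2
    exact ⟨Finset.univ, by simp [domSets]⟩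
  have hnonneg : ∀ v ∈ Finset.univ, 0 ≤ tt G v := by
    intro v _
    by_cases hl : IsLeaf G v
    · exact (tt_leaf G v hl).ge
    rcases Finset.eq_empty_or_nonempty (lf G v) with h | ⟨x, hx⟩
    · exact (tt_other G v hl h (hiso v)).le
    · exact tt_supp_nonneg G v x hx
  have hmain : avd G = 2 * (Fintype.card V : ℚ) / 3 ↔ ∑ v, tt G v = 0 := by
    rw [← key_sum']
    have hDq : (0 : ℚ) < (domSets G).card := by exact_mod_cast hD
    unfold avd
    rw [div_eq_div_iff hDq.ne' (by norm_num)]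
    rw [← @Int.cast_inj ℚ]
    push_cast
    constructor <;> intro h <;> linarith
  rw [hmain, Finset.sum_eq_zero_iff_of_nonneg hnonneg]
  simp only [hlf, hsup]
  constructor
  · intro h v hl
    have hv := h v (Finset.mem_univ v)
    rcases Finset.eq_empty_or_nonempty (lf G v) with h' | h'
    · exact absurd hv (tt_other G v hl h' (hiso v)).ne'
    · refine ⟨h', ?_⟩
      have h1 := Finset.card_pos.2 h'
      by_contra hc
      exact absurd hv (tt_supp_pos G v (by omega)).ne'
  · intro h v _
    by_cases hl : IsLeaf G v
    · exact tt_leaf G v hl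
    apply tt_zero G _ v
    · have := (h v hl).2
      omega
    · intro u
      by_cases hu : IsLeaf G u
      · exact Or.inl hu
      · exact Or.inr (h u hu).1
end
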